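/- arXiv:2408.14011 — 5 statements merged into one kernel-verified Lean document; each statement's English description precedes it below -/
import Mathlib

section
/- Let ψ be a unit vector in ℂ^{d₁} ⊗ ℂ^{d₂} (represented as ψ : Fin d₁ × Fin d₂ → ℂ with ∑_{i,j} |ψ(i,j)|² = 1), let ρ₁ be its reduced density matrix on the first factor, ρ₁(i,i') = ∑_j ψ(i,j)·conj(ψ(i',j)), and let C(ψ) = √(2(1 − Tr(ρ₁²))) be its concurrence. Then C(ψ) = 0 if and only if ψ is a product state, i.e. there exist vectors u : Fin d₁ → ℂ and v : Fin d₂ → ℂ with ψ(i,j) = u(i)·v(j) for all i, j. -/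
open scoped BigOperators

/-- The reduced density matrix on the first factor of a bipartite pure state:
`ρ₁ i i' = ∑ j, ψ (i, j) * conj (ψ (i', j))`. -/
noncomputable def redMat {α β : Type*} [Fintype β] (ψ : α × β → ℂ) : Matrix α α ℂ :=
  Matrix.of fun i i' => ∑ j, ψ (i, j) * (starRingEnd ℂ) (ψ (i', j))

/-- The concurrence `C(ψ) = √(2(1 − Tr(ρ₁²)))` of a bipartite pure state. -/
noncomputable def conc {α β : Type*} [Fintype α] [Fintype β] (ψ : α × β → ℂ) : ℝ :=
  Real.sqrt (2 * (1 - (Matrix.trace (redMat ψ * redMat ψ)).re))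

theorem conc_key {d₁ d₂ : ℕ} (ψ : Fin d₁ × Fin d₂ → ℂ)
    (hψ : ∑ x : Fin d₁ × Fin d₂, Complex.normSq (ψ x) = 1) :
    ∑ i, ∑ i', ∑ j, ∑ j', Complex.normSq (ψ (i, j) * ψ (i', j') - ψ (i, j') * ψ (i', j))
      = 2 * (1 - (Matrix.trace (redMat ψ * redMat ψ)).re) := by
  have hN : ∑ i, ∑ j, ψ (i, j) * (starRingEnd ℂ) (ψ (i, j)) = 1 := by
    rw [← Fintype.sum_prod_type' (f := fun i j => ψ (i, j) * (starRingEnd ℂ) (ψ (i, j)))]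
    simp only [Complex.mul_conj]
    exact_mod_cast hψ
  have hA : ∑ i, ∑ i', ∑ j, ∑ j', (ψ (i, j) * (starRingEnd ℂ) (ψ (i, j))) *
      (ψ (i', j') * (starRingEnd ℂ) (ψ (i', j'))) = 1 := by
    simp only [← Finset.mul_sum, ← Finset.sum_mul, hN]
    simp
  have hB : ∑ i, ∑ i', ∑ j, ∑ j', (ψ (i, j') * (starRingEnd ℂ) (ψ (i, j'))) *
      (ψ (i', j) * (starRingEnd ℂ) (ψ (i', j))) = 1 := by
    rw [← hA]
    refine Finset.sum_congr rfl fun i _ => Finset.sum_congr rfl fun i' _ => ?_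
    rw [Finset.sum_comm]
  have hT : ∑ i, ∑ i', ∑ j, ∑ j', (ψ (i, j) * (starRingEnd ℂ) (ψ (i', j))) *
      (ψ (i', j') * (starRingEnd ℂ) (ψ (i, j'))) = Matrix.trace (redMat ψ * redMat ψ) := by
    simp only [Matrix.trace, Matrix.diag, Matrix.mul_apply, redMat, Matrix.of_apply,
      Finset.sum_mul_sum]
  have hT' : ∑ i, ∑ i', ∑ j, ∑ j', (ψ (i, j') * (starRingEnd ℂ) (ψ (i', j'))) *
      (ψ (i', j) * (starRingEnd ℂ) (ψ (i, j))) = Matrix.trace (redMat ψ * redMat ψ) := by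
    rw [← hT]
    refine Finset.sum_congr rfl fun i _ => Finset.sum_congr rfl fun i' _ => ?_
    rw [Finset.sum_comm]
  have hS : ((∑ i, ∑ i', ∑ j, ∑ j',
      Complex.normSq (ψ (i, j) * ψ (i', j') - ψ (i, j') * ψ (i', j)) : ℝ) : ℂ)
      = 1 + 1 - Matrix.trace (redMat ψ * redMat ψ) - Matrix.trace (redMat ψ * redMat ψ) := by
    nth_rewrite 1 [← hA]
    rw [← hB]
    nth_rewrite 1 [← hT]
    rw [← hT']
    push_cast
    simp only [← Finset.sum_add_distrib, ← Finset.sum_sub_distrib]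
    refine Finset.sum_congr rfl fun i _ => Finset.sum_congr rfl fun i' _ =>
      Finset.sum_congr rfl fun j _ => Finset.sum_congr rfl fun j' _ => ?_
    rw [← Complex.mul_conj]
    simp only [map_sub, map_mul]
    ring
  have := congrArg Complex.re hS
  simp only [Complex.ofReal_re, Complex.sub_re, Complex.add_re, Complex.one_re] at this
  rw [this]; ring

/-- For a unit vector `ψ` in `ℂ^{d₁} ⊗ ℂ^{d₂}`, the concurrence vanishes if and only if
`ψ` is a product state. -/
theorem concurrence_eq_zero_iff_product {d₁ d₂ : ℕ}
    (ψ : Fin d₁ × Fin d₂ → ℂ)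
    (hψ : ∑ x : Fin d₁ × Fin d₂, Complex.normSq (ψ x) = 1) :
    conc ψ = 0 ↔
      ∃ (u : Fin d₁ → ℂ) (v : Fin d₂ → ℂ), ∀ (i : Fin d₁) (j : Fin d₂),
        ψ (i, j) = u i * v j := by
  have key := conc_key ψ hψ
  have hnn : ∀ i i' j j', 0 ≤ Complex.normSq (ψ (i, j) * ψ (i', j') - ψ (i, j') * ψ (i', j)) :=
    fun _ _ _ _ => Complex.normSq_nonneg _
  unfold conc
  rw [← key]
  constructor
  · intro h
    rw [Real.sqrt_eq_zero (by
          repeat first | exact Complex.normSq_nonneg _ | refine Finset.sum_nonneg fun _ _ => ?_)] at h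
    have hD : ∀ i i' j j', ψ (i, j) * ψ (i', j') - ψ (i, j') * ψ (i', j) = 0 := by
      intro i i' j j'
      have h1 := (Finset.sum_eq_zero_iff_of_nonneg (fun _ _ => by
          repeat first | exact Complex.normSq_nonneg _ | refine Finset.sum_nonneg fun _ _ => ?_)).1 h i
        (Finset.mem_univ _)
      have h2 := (Finset.sum_eq_zero_iff_of_nonneg (fun _ _ => by
          repeat first | exact Complex.normSq_nonneg _ | refine Finset.sum_nonneg fun _ _ => ?_)).1 h1 i'
        (Finset.mem_univ _)
      have h3 := (Finset.sum_eq_zero_iff_of_nonneg (fun _ _ => by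
          repeat first | exact Complex.normSq_nonneg _ | refine Finset.sum_nonneg fun _ _ => ?_)).1 h2 j
        (Finset.mem_univ _)
      have h4 := (Finset.sum_eq_zero_iff_of_nonneg (fun _ _ => hnn _ _ _ _)).1 h3 j'
        (Finset.mem_univ _)
      exact Complex.normSq_eq_zero.1 h4
    have hx : ∃ x, ψ x ≠ 0 := by
      by_contra hc
      push Not at hc
      simp [hc] at hψ
    obtain ⟨⟨a, b⟩, hab⟩ := hx
    refine ⟨fun i => ψ (i, b), fun j => ψ (a, j) / ψ (a, b), fun i j => ?_⟩
    have := hD i a j b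
    field_simp
    linear_combination this
  · rintro ⟨u, v, huv⟩
    rw [Real.sqrt_eq_zero (by
          repeat first | exact Complex.normSq_nonneg _ | refine Finset.sum_nonneg fun _ _ => ?_)]
    refine Finset.sum_eq_zero fun i _ => Finset.sum_eq_zero fun i' _ =>
      Finset.sum_eq_zero fun j _ => Finset.sum_eq_zero fun j' _ => ?_
    rw [Complex.normSq_eq_zero]
    simp only [huv]
    ring
end

section
/- Let ψ be a unit vector in ℂ^{d₁} ⊗ ℂ^{d₂} ⊗ ℂ^{d₃} ⊗ ℂ^{d₄}. Then V₁₂₃₄(ψ) > 0 if and only if ψ is genuinely multipartite entangled, i.e. for every nonempty proper subset S of {1,2,3,4} there exist no vectors u (on the subsystems in S) and v (on the subsystems in the complement Sᶜ) with ψ(x) = u(x_S)·v(x_{Sᶜ}) for all indices x. -/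
open scoped BigOperators

section FourPartite

variable {d₁ d₂ d₃ d₄ : ℕ}

/-- Bipartition concurrence `C_{1|234}`. -/
noncomputable def C1 (ψ : Fin d₁ × Fin d₂ × Fin d₃ × Fin d₄ → ℂ) : ℝ :=
  conc fun p : Fin d₁ × (Fin d₂ × Fin d₃ × Fin d₄) => ψ (p.1, p.2)

/-- Bipartition concurrence `C_{2|134}`. -/
noncomputable def C2 (ψ : Fin d₁ × Fin d₂ × Fin d₃ × Fin d₄ → ℂ) : ℝ :=
  conc fun p : Fin d₂ × (Fin d₁ × Fin d₃ × Fin d₄) => ψ (p.2.1, p.1, p.2.2)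

/-- Bipartition concurrence `C_{3|124}`. -/
noncomputable def C3 (ψ : Fin d₁ × Fin d₂ × Fin d₃ × Fin d₄ → ℂ) : ℝ :=
  conc fun p : Fin d₃ × (Fin d₁ × Fin d₂ × Fin d₄) => ψ (p.2.1, p.2.2.1, p.1, p.2.2.2)

/-- Bipartition concurrence `C_{4|123}`. -/
noncomputable def C4 (ψ : Fin d₁ × Fin d₂ × Fin d₃ × Fin d₄ → ℂ) : ℝ :=
  conc fun p : Fin d₄ × (Fin d₁ × Fin d₂ × Fin d₃) => ψ (p.2.1, p.2.2.1, p.2.2.2, p.1)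

/-- Bipartition concurrence `C_{12|34}`. -/
noncomputable def C12 (ψ : Fin d₁ × Fin d₂ × Fin d₃ × Fin d₄ → ℂ) : ℝ :=
  conc fun p : (Fin d₁ × Fin d₂) × (Fin d₃ × Fin d₄) => ψ (p.1.1, p.1.2, p.2.1, p.2.2)

/-- Bipartition concurrence `C_{13|24}`. -/
noncomputable def C13 (ψ : Fin d₁ × Fin d₂ × Fin d₃ × Fin d₄ → ℂ) : ℝ :=
  conc fun p : (Fin d₁ × Fin d₃) × (Fin d₂ × Fin d₄) => ψ (p.1.1, p.2.1, p.1.2, p.2.2)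

/-- Bipartition concurrence `C_{14|23}`. -/
noncomputable def C14 (ψ : Fin d₁ × Fin d₂ × Fin d₃ × Fin d₄ → ℂ) : ℝ :=
  conc fun p : (Fin d₁ × Fin d₄) × (Fin d₂ × Fin d₃) => ψ (p.1.1, p.2.1, p.2.2, p.1.2)

/-- Bottom edge length `a = (C_{1|234}·C_{2|134}·C_{3|124}·C_{4|123})^{1/4}`. -/
noncomputable def pyrA (ψ : Fin d₁ × Fin d₂ × Fin d₃ × Fin d₄ → ℂ) : ℝ :=
  (C1 ψ * C2 ψ * C3 ψ * C4 ψ) ^ ((1 : ℝ) / 4)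

/-- Height `h = (C_{12|34}·C_{13|24}·C_{14|23})^{1/3}`. -/
noncomputable def pyrH (ψ : Fin d₁ × Fin d₂ × Fin d₃ × Fin d₄ → ℂ) : ℝ :=
  (C12 ψ * C13 ψ * C14 ψ) ^ ((1 : ℝ) / 3)

/-- The concurrence rectangular pyramid measure `V₁₂₃₄(ψ) = (1/3)·a²·h`. -/
noncomputable def V1234 (ψ : Fin d₁ × Fin d₂ × Fin d₃ × Fin d₄ → ℂ) : ℝ :=
  (1 / 3 : ℝ) * (pyrA ψ) ^ 2 * pyrH ψ

end FourPartite

lemma conc_radicand {α β : Type*} [Fintype α] [Fintype β] (φ : α × β → ℂ)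
    (hφ : ∑ x, Complex.normSq (φ x) = 1) :
    2 * (1 - (Matrix.trace (redMat φ * redMat φ)).re) =
      ∑ i, ∑ i', ∑ j, ∑ j',
        Complex.normSq (φ (i, j) * φ (i', j') - φ (i, j') * φ (i', j)) := by
  have hN : ∑ i, ∑ j, φ (i, j) * (starRingEnd ℂ) (φ (i, j)) = 1 := by
    rw [← Fintype.sum_prod_type (f := fun x => φ x * (starRingEnd ℂ) (φ x))]
    simp only [Complex.mul_conj]
    exact_mod_cast hφ
  have hA : ∑ i, ∑ i', ∑ j, ∑ j', (φ (i, j) * (starRingEnd ℂ) (φ (i, j))) *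
      (φ (i', j') * (starRingEnd ℂ) (φ (i', j'))) = 1 := by
    simp only [← Finset.mul_sum, ← Finset.sum_mul, hN, mul_one]
  have hA' : ∑ i, ∑ i', ∑ j, ∑ j', (φ (i, j') * (starRingEnd ℂ) (φ (i, j'))) *
      (φ (i', j) * (starRingEnd ℂ) (φ (i', j))) = 1 := by
    rw [← hA]
    refine Finset.sum_congr rfl fun i _ => Finset.sum_congr rfl fun i' _ => ?_
    rw [Finset.sum_comm]
  have hT : ∑ i, ∑ i', ∑ j, ∑ j', (φ (i, j) * (starRingEnd ℂ) (φ (i', j))) *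
      (φ (i', j') * (starRingEnd ℂ) (φ (i, j'))) = Matrix.trace (redMat φ * redMat φ) := by
    simp only [Matrix.trace, Matrix.diag, Matrix.mul_apply, redMat, Matrix.of_apply,
      ← Finset.mul_sum, ← Finset.sum_mul]
  have hT' : ∑ i, ∑ i', ∑ j, ∑ j', (φ (i, j') * (starRingEnd ℂ) (φ (i', j'))) *
      (φ (i', j) * (starRingEnd ℂ) (φ (i, j))) = Matrix.trace (redMat φ * redMat φ) := by
    rw [← hT]
    refine Finset.sum_congr rfl fun i _ => Finset.sum_congr rfl fun i' _ => ?_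
    rw [Finset.sum_comm]
  have key : ((∑ i, ∑ i', ∑ j, ∑ j',
        Complex.normSq (φ (i, j) * φ (i', j') - φ (i, j') * φ (i', j)) : ℝ) : ℂ) =
      1 + 1 - Matrix.trace (redMat φ * redMat φ) - Matrix.trace (redMat φ * redMat φ) := by
    nth_rewrite 1 [← hA]
    rw [← hA']
    nth_rewrite 1 [← hT]
    rw [← hT']
    push_cast
    simp only [← Finset.sum_add_distrib, ← Finset.sum_sub_distrib]
    refine Finset.sum_congr rfl fun i _ => Finset.sum_congr rfl fun i' _ =>
      Finset.sum_congr rfl fun j _ => Finset.sum_congr rfl fun j' _ => ?_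
    rw [← Complex.mul_conj]
    simp only [map_sub, map_mul]
    ring
  have := congrArg Complex.re key
  rw [Complex.ofReal_re] at this
  rw [this]
  simp only [Complex.sub_re, Complex.add_re, Complex.one_re]
  ring

lemma conc_pos_iff {α β : Type*} [Fintype α] [Fintype β] (φ : α × β → ℂ)
    (hφ : ∑ x, Complex.normSq (φ x) = 1) :
    0 < conc φ ↔ ¬ ∃ (u : α → ℂ) (v : β → ℂ), ∀ x, φ x = u x.1 * v x.2 := by
  rw [conc, Real.sqrt_pos, conc_radicand φ hφ]
  constructor
  · rintro h ⟨u, v, huv⟩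
    refine h.ne' ?_
    refine Finset.sum_eq_zero fun i _ => Finset.sum_eq_zero fun i' _ =>
      Finset.sum_eq_zero fun j _ => Finset.sum_eq_zero fun j' _ => ?_
    rw [Complex.normSq_eq_zero, huv, huv, huv, huv]
    ring
  · intro h
    by_contra hn
    apply h
    have hm : ∀ i i' j j', φ (i, j) * φ (i', j') - φ (i, j') * φ (i', j) = 0 := by
      intro i i' j j'
      by_contra hne
      apply hn
      refine Finset.sum_pos' (fun _ _ => Finset.sum_nonneg fun _ _ => Finset.sum_nonneg fun _ _ =>
        Finset.sum_nonneg fun _ _ => Complex.normSq_nonneg _) ⟨i, Finset.mem_univ _, ?_⟩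
      refine Finset.sum_pos' (fun _ _ => Finset.sum_nonneg fun _ _ =>
        Finset.sum_nonneg fun _ _ => Complex.normSq_nonneg _) ⟨i', Finset.mem_univ _, ?_⟩
      refine Finset.sum_pos' (fun _ _ => 
        Finset.sum_nonneg fun _ _ => Complex.normSq_nonneg _) ⟨j, Finset.mem_univ _, ?_⟩
      exact Finset.sum_pos' (fun _ _ => Complex.normSq_nonneg _) 
        ⟨j', Finset.mem_univ _, Complex.normSq_pos.2 hne⟩
    by_cases h0 : ∃ x, φ x ≠ 0
    · obtain ⟨⟨i₀, j₀⟩, h0⟩ := h0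
      refine ⟨fun i => φ (i, j₀), fun j => φ (i₀, j) / φ (i₀, j₀), ?_⟩
      rintro ⟨i, j⟩
      have := hm i i₀ j j₀
      field_simp
      linear_combination this
    · push Not at h0
      exact ⟨0, 0, fun x => by simp [h0 x]⟩

lemma conc_nonneg {α β : Type*} [Fintype α] [Fintype β] (φ : α × β → ℂ) : 0 ≤ conc φ :=
  Real.sqrt_nonneg _

lemma mul_pos_iff_nn {a b : ℝ} (ha : 0 ≤ a) (hb : 0 ≤ b) : 0 < a * b ↔ 0 < a ∧ 0 < b := by
  constructor
  · intro h
    exact ⟨lt_of_le_of_ne ha (by rintro rfl; simp at h), lt_of_le_of_ne hb (by rintro rfl; simp at h)⟩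
  · rintro ⟨h, h'⟩
    exact mul_pos h h'

lemma rpow_pos_iff_nn {a r : ℝ} (ha : 0 ≤ a) (hr : 0 < r) : 0 < a ^ r ↔ 0 < a := by
  constructor
  · intro h
    refine lt_of_le_of_ne ha ?_
    rintro rfl
    rw [Real.zero_rpow hr.ne'] at h
    exact lt_irrefl _ h
  · intro h
    exact Real.rpow_pos_of_pos h r

lemma sum_equiv_one {X Y : Type*} [Fintype X] [Fintype Y] (ψ : X → ℂ)
    (hψ : ∑ x, Complex.normSq (ψ x) = 1) (f : Y → X) (g : X → Y)
    (hfg : ∀ x, f (g x) = x) (hgf : ∀ y, g (f y) = y) :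
    ∑ y, Complex.normSq (ψ (f y)) = 1 := by
  rw [← hψ]
  exact Fintype.sum_equiv ⟨f, g, hgf, hfg⟩ _ _ fun _ => rfl

lemma part_pos_iff {X α β : Type*} [Fintype X] [Fintype α] [Fintype β] (ψ : X → ℂ)
    (hψ : ∑ x, Complex.normSq (ψ x) = 1) (f : α × β → X) (g : X → α × β)
    (hfg : ∀ x, f (g x) = x) (hgf : ∀ y, g (f y) = y) :
    0 < conc (fun p => ψ (f p)) ↔
      ¬ ∃ (u : α → ℂ) (v : β → ℂ), ∀ x, ψ x = u (g x).1 * v (g x).2 := by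
  rw [conc_pos_iff _ (sum_equiv_one ψ hψ f g hfg hgf)]
  refine not_congr (exists_congr fun u => exists_congr fun v => ?_)
  constructor
  · intro h x
    have := h (g x)
    rwa [hfg] at this
  · intro h y
    have := h (f y)
    rwa [hgf] at this

/-- `V₁₂₃₄(ψ) > 0` iff `ψ` is genuinely multipartite entangled, i.e. `ψ` is not a
product across any of the seven bipartitions `1|234, 2|134, 3|124, 4|123, 12|34, 13|24, 14|23`. -/
theorem V1234_pos_iff_GME {d₁ d₂ d₃ d₄ : ℕ}
    (ψ : Fin d₁ × Fin d₂ × Fin d₃ × Fin d₄ → ℂ)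
    (hψ : ∑ x : Fin d₁ × Fin d₂ × Fin d₃ × Fin d₄, Complex.normSq (ψ x) = 1) :
    0 < V1234 ψ ↔
      (¬ ∃ (u : Fin d₁ → ℂ) (v : Fin d₂ × Fin d₃ × Fin d₄ → ℂ),
          ∀ x : Fin d₁ × Fin d₂ × Fin d₃ × Fin d₄, ψ x = u x.1 * v x.2) ∧
      (¬ ∃ (u : Fin d₂ → ℂ) (v : Fin d₁ × Fin d₃ × Fin d₄ → ℂ),
          ∀ x : Fin d₁ × Fin d₂ × Fin d₃ × Fin d₄, ψ x = u x.2.1 * v (x.1, x.2.2)) ∧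
      (¬ ∃ (u : Fin d₃ → ℂ) (v : Fin d₁ × Fin d₂ × Fin d₄ → ℂ),
          ∀ x : Fin d₁ × Fin d₂ × Fin d₃ × Fin d₄, ψ x = u x.2.2.1 * v (x.1, x.2.1, x.2.2.2)) ∧
      (¬ ∃ (u : Fin d₄ → ℂ) (v : Fin d₁ × Fin d₂ × Fin d₃ → ℂ),
          ∀ x : Fin d₁ × Fin d₂ × Fin d₃ × Fin d₄, ψ x = u x.2.2.2 * v (x.1, x.2.1, x.2.2.1)) ∧
      (¬ ∃ (u : Fin d₁ × Fin d₂ → ℂ) (v : Fin d₃ × Fin d₄ → ℂ),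
          ∀ x : Fin d₁ × Fin d₂ × Fin d₃ × Fin d₄, ψ x = u (x.1, x.2.1) * v x.2.2) ∧
      (¬ ∃ (u : Fin d₁ × Fin d₃ → ℂ) (v : Fin d₂ × Fin d₄ → ℂ),
          ∀ x : Fin d₁ × Fin d₂ × Fin d₃ × Fin d₄, ψ x = u (x.1, x.2.2.1) * v (x.2.1, x.2.2.2)) ∧
      (¬ ∃ (u : Fin d₁ × Fin d₄ → ℂ) (v : Fin d₂ × Fin d₃ → ℂ),
          ∀ x : Fin d₁ × Fin d₂ × Fin d₃ × Fin d₄, ψ x = u (x.1, x.2.2.2) * v (x.2.1, x.2.2.1)) := by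
  have n1 : 0 ≤ C1 ψ := conc_nonneg _
  have n2 : 0 ≤ C2 ψ := conc_nonneg _
  have n3 : 0 ≤ C3 ψ := conc_nonneg _
  have n4 : 0 ≤ C4 ψ := conc_nonneg _
  have n12 : 0 ≤ C12 ψ := conc_nonneg _
  have n13 : 0 ≤ C13 ψ := conc_nonneg _
  have n14 : 0 ≤ C14 ψ := conc_nonneg _
  have hA : 0 ≤ pyrA ψ := Real.rpow_nonneg (by positivity) _
  have hH : 0 ≤ pyrH ψ := Real.rpow_nonneg (by positivity) _
  have hV : 0 < V1234 ψ ↔ 0 < C1 ψ ∧ 0 < C2 ψ ∧ 0 < C3 ψ ∧ 0 < C4 ψ ∧ 0 < C12 ψ ∧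
      0 < C13 ψ ∧ 0 < C14 ψ := by
    have e : V1234 ψ = (1 / 3 : ℝ) * ((pyrA ψ * pyrA ψ) * pyrH ψ) := by
      rw [V1234]; ring
    rw [e, mul_pos_iff_of_pos_left (by norm_num), mul_pos_iff_nn (mul_nonneg hA hA) hH,
      mul_pos_iff_nn hA hA, and_self, pyrA, pyrH,
      rpow_pos_iff_nn (by positivity) (by norm_num), rpow_pos_iff_nn (by positivity) (by norm_num),
      mul_pos_iff_nn (by positivity) n4, mul_pos_iff_nn (by positivity) n3,
      mul_pos_iff_nn n1 n2, mul_pos_iff_nn (by positivity) n14, mul_pos_iff_nn n12 n13]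
    tauto
  rw [hV]
  refine and_congr ?_ (and_congr ?_ (and_congr ?_ (and_congr ?_ (and_congr ?_ (and_congr ?_ ?_)))))
  · exact part_pos_iff ψ hψ (fun p : Fin d₁ × (Fin d₂ × Fin d₃ × Fin d₄) => (p.1, p.2))
      (fun x => (x.1, x.2)) (fun _ => rfl) (fun _ => rfl)
  · exact part_pos_iff ψ hψ
      (fun p : Fin d₂ × (Fin d₁ × Fin d₃ × Fin d₄) => (p.2.1, p.1, p.2.2))
      (fun x => (x.2.1, (x.1, x.2.2))) (fun _ => rfl) (fun _ => rfl)
  · exact part_pos_iff ψ hψ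
      (fun p : Fin d₃ × (Fin d₁ × Fin d₂ × Fin d₄) => (p.2.1, p.2.2.1, p.1, p.2.2.2))
      (fun x => (x.2.2.1, (x.1, x.2.1, x.2.2.2))) (fun _ => rfl) (fun _ => rfl)
  · exact part_pos_iff ψ hψ
      (fun p : Fin d₄ × (Fin d₁ × Fin d₂ × Fin d₃) => (p.2.1, p.2.2.1, p.2.2.2, p.1))
      (fun x => (x.2.2.2, (x.1, x.2.1, x.2.2.1))) (fun _ => rfl) (fun _ => rfl)
  · exact part_pos_iff ψ hψ
      (fun p : (Fin d₁ × Fin d₂) × (Fin d₃ × Fin d₄) => (p.1.1, p.1.2, p.2.1, p.2.2))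
      (fun x => ((x.1, x.2.1), x.2.2)) (fun _ => rfl) (fun _ => rfl)
  · exact part_pos_iff ψ hψ
      (fun p : (Fin d₁ × Fin d₃) × (Fin d₂ × Fin d₄) => (p.1.1, p.2.1, p.1.2, p.2.2))
      (fun x => ((x.1, x.2.2.1), (x.2.1, x.2.2.2))) (fun _ => rfl) (fun _ => rfl)
  · exact part_pos_iff ψ hψ
      (fun p : (Fin d₁ × Fin d₄) × (Fin d₂ × Fin d₃) => (p.1.1, p.2.1, p.2.2, p.1.2))
      (fun x => ((x.1, x.2.2.2), (x.2.1, x.2.2.1))) (fun _ => rfl) (fun _ => rfl)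
end

section
/- For the four-qubit GHZ state |GHZ⟩ = (1/√2)(|0000⟩ + |1111⟩) and the four-qubit W state |W⟩ = (1/2)(|1000⟩ + |0100⟩ + |0010⟩ + |0001⟩), the concurrence rectangular pyramid measure satisfies V₁₂₃₄(GHZ) > V₁₂₃₄(W); that is, the GHZ state is more entangled than the W state under this measure. -/
open scoped BigOperators

/-- The four-qubit GHZ state `(1/√2)(|0000⟩ + |1111⟩)`. -/
noncomputable def GHZ4 : Fin 2 × Fin 2 × Fin 2 × Fin 2 → ℂ :=
  fun x => if x = (0, 0, 0, 0) ∨ x = (1, 1, 1, 1) then ((Real.sqrt 2)⁻¹ : ℝ) else 0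

/-- The four-qubit W state `(1/2)(|1000⟩ + |0100⟩ + |0010⟩ + |0001⟩)`. -/
noncomputable def W4 : Fin 2 × Fin 2 × Fin 2 × Fin 2 → ℂ :=
  fun x => if x = (1, 0, 0, 0) ∨ x = (0, 1, 0, 0) ∨ x = (0, 0, 1, 0) ∨ x = (0, 0, 0, 1)
    then (1 / 2 : ℂ) else 0

theorem ghz_sq : (((Real.sqrt 2 : ℝ) : ℂ))⁻¹ * (((Real.sqrt 2 : ℝ) : ℂ))⁻¹ = 1 / 2 := by
  rw [← mul_inv, ← Complex.ofReal_mul, Real.mul_self_sqrt (by norm_num)]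
  norm_num

theorem C1_GHZ4 : C1 GHZ4 = 1 := by
  simp [C1, conc, redMat, GHZ4, Matrix.trace, Matrix.mul_apply, Fintype.sum_prod_type, ghz_sq]
  try norm_num

theorem C2_GHZ4 : C2 GHZ4 = 1 := by
  simp [C2, conc, redMat, GHZ4, Matrix.trace, Matrix.mul_apply, Fintype.sum_prod_type, ghz_sq]
  try norm_num

theorem C3_GHZ4 : C3 GHZ4 = 1 := by
  simp [C3, conc, redMat, GHZ4, Matrix.trace, Matrix.mul_apply, Fintype.sum_prod_type, ghz_sq]
  try norm_num

theorem C4_GHZ4 : C4 GHZ4 = 1 := by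
  simp [C4, conc, redMat, GHZ4, Matrix.trace, Matrix.mul_apply, Fintype.sum_prod_type, ghz_sq]
  try norm_num

theorem C12_GHZ4 : C12 GHZ4 = 1 := by
  simp [C12, conc, redMat, GHZ4, Matrix.trace, Matrix.mul_apply, Fintype.sum_prod_type, ghz_sq]
  try norm_num

theorem C13_GHZ4 : C13 GHZ4 = 1 := by
  simp [C13, conc, redMat, GHZ4, Matrix.trace, Matrix.mul_apply, Fintype.sum_prod_type, ghz_sq]
  try norm_num

theorem C14_GHZ4 : C14 GHZ4 = 1 := by
  simp [C14, conc, redMat, GHZ4, Matrix.trace, Matrix.mul_apply, Fintype.sum_prod_type, ghz_sq]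
  try norm_num

theorem C1_W4 : C1 W4 = √(3 / 4) := by
  unfold C1 conc
  congr 1
  simp [redMat, W4, Matrix.trace, Matrix.mul_apply, Fintype.sum_prod_type]
  try norm_num

theorem C2_W4 : C2 W4 = √(3 / 4) := by
  unfold C2 conc
  congr 1
  simp [redMat, W4, Matrix.trace, Matrix.mul_apply, Fintype.sum_prod_type]
  try norm_num

theorem C3_W4 : C3 W4 = √(3 / 4) := by
  unfold C3 conc
  congr 1
  simp [redMat, W4, Matrix.trace, Matrix.mul_apply, Fintype.sum_prod_type]
  try norm_num

theorem C4_W4 : C4 W4 = √(3 / 4) := by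
  unfold C4 conc
  congr 1
  simp [redMat, W4, Matrix.trace, Matrix.mul_apply, Fintype.sum_prod_type]
  try norm_num

theorem C12_W4 : C12 W4 = 1 := by
  simp [C12, conc, redMat, W4, Matrix.trace, Matrix.mul_apply, Fintype.sum_prod_type]
  try norm_num

theorem C13_W4 : C13 W4 = 1 := by
  simp [C13, conc, redMat, W4, Matrix.trace, Matrix.mul_apply, Fintype.sum_prod_type]
  try norm_num

theorem C14_W4 : C14 W4 = 1 := by
  simp [C14, conc, redMat, W4, Matrix.trace, Matrix.mul_apply, Fintype.sum_prod_type]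
  try norm_num

/-- The GHZ state is more entangled than the W state under the concurrence rectangular
pyramid measure: `V₁₂₃₄(GHZ) > V₁₂₃₄(W)`. -/
theorem V1234_GHZ4_gt_V1234_W4 : V1234 W4 < V1234 GHZ4 := by
  have hG : V1234 GHZ4 = 1 / 3 := by
    simp [V1234, pyrA, pyrH, C1_GHZ4, C2_GHZ4, C3_GHZ4, C4_GHZ4, C12_GHZ4, C13_GHZ4, C14_GHZ4]
  have hs : √(3 / 4 : ℝ) * √(3 / 4) * √(3 / 4) * √(3 / 4) = (3 / 4) ^ 2 := by
    have h : √(3 / 4 : ℝ) * √(3 / 4) = 3 / 4 := Real.mul_self_sqrt (by norm_num)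
    rw [h, mul_assoc, h]; norm_num
  have hW : pyrA W4 < 1 := by
    rw [pyrA, C1_W4, C2_W4, C3_W4, C4_W4, hs]
    exact Real.rpow_lt_one (by norm_num) (by norm_num) (by norm_num)
  have hW0 : 0 ≤ pyrA W4 := by
    rw [pyrA, C1_W4, C2_W4, C3_W4, C4_W4]
    positivity
  have hH : pyrH W4 = 1 := by
    simp [pyrH, C12_W4, C13_W4, C14_W4]
  rw [hG, V1234, hH]
  nlinarith
end

section
/- For the four-qubit states |ψ_A⟩ = (1/2)(|0000⟩ + |1011⟩ + |1101⟩ + |1110⟩) and |ψ_B⟩ = (1/2)(|0000⟩ + |0101⟩ + |1000⟩ + |1110⟩), the concurrence rectangular pyramid measure distinguishes them: V₁₂₃₄(ψ_A) > V₁₂₃₄(ψ_B) > 0. -/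
open scoped BigOperators

/-- The four-qubit state `ψ_A = (1/2)(|0000⟩ + |1011⟩ + |1101⟩ + |1110⟩)`. -/
noncomputable def psiA : Fin 2 × Fin 2 × Fin 2 × Fin 2 → ℂ :=
  fun x => if x = (0, 0, 0, 0) ∨ x = (1, 0, 1, 1) ∨ x = (1, 1, 0, 1) ∨ x = (1, 1, 1, 0)
    then (1 / 2 : ℂ) else 0

/-- The four-qubit state `ψ_B = (1/2)(|0000⟩ + |0101⟩ + |1000⟩ + |1110⟩)`. -/
noncomputable def psiB : Fin 2 × Fin 2 × Fin 2 × Fin 2 → ℂ :=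
  fun x => if x = (0, 0, 0, 0) ∨ x = (0, 1, 0, 1) ∨ x = (1, 0, 0, 0) ∨ x = (1, 1, 1, 0)
    then (1 / 2 : ℂ) else 0

theorem C1_psiA : C1 psiA = Real.sqrt (3/4) := by
  unfold C1 conc
  congr 1
  simp [Matrix.trace, Matrix.mul_apply, redMat, psiA, Fintype.sum_prod_type, Fin.sum_univ_two]
  try norm_num

theorem C2_psiA : C2 psiA = Real.sqrt (1) := by
  unfold C2 conc
  congr 1
  simp [Matrix.trace, Matrix.mul_apply, redMat, psiA, Fintype.sum_prod_type, Fin.sum_univ_two]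
  try norm_num

theorem C3_psiA : C3 psiA = Real.sqrt (1) := by
  unfold C3 conc
  congr 1
  simp [Matrix.trace, Matrix.mul_apply, redMat, psiA, Fintype.sum_prod_type, Fin.sum_univ_two]
  try norm_num

theorem C4_psiA : C4 psiA = Real.sqrt (1) := by
  unfold C4 conc
  congr 1
  simp [Matrix.trace, Matrix.mul_apply, redMat, psiA, Fintype.sum_prod_type, Fin.sum_univ_two]
  try norm_num

theorem C12_psiA : C12 psiA = Real.sqrt (5/4) := by
  unfold C12 conc
  congr 1
  simp [Matrix.trace, Matrix.mul_apply, redMat, psiA, Fintype.sum_prod_type, Fin.sum_univ_two]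
  try norm_num

theorem C13_psiA : C13 psiA = Real.sqrt (5/4) := by
  unfold C13 conc
  congr 1
  simp [Matrix.trace, Matrix.mul_apply, redMat, psiA, Fintype.sum_prod_type, Fin.sum_univ_two]
  try norm_num

theorem C14_psiA : C14 psiA = Real.sqrt (5/4) := by
  unfold C14 conc
  congr 1
  simp [Matrix.trace, Matrix.mul_apply, redMat, psiA, Fintype.sum_prod_type, Fin.sum_univ_two]
  try norm_num

theorem C1_psiB : C1 psiB = Real.sqrt (3/4) := by
  unfold C1 conc
  congr 1
  simp [Matrix.trace, Matrix.mul_apply, redMat, psiB, Fintype.sum_prod_type, Fin.sum_univ_two]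
  try norm_num

theorem C2_psiB : C2 psiB = Real.sqrt (1) := by
  unfold C2 conc
  congr 1
  simp [Matrix.trace, Matrix.mul_apply, redMat, psiB, Fintype.sum_prod_type, Fin.sum_univ_two]
  try norm_num

theorem C3_psiB : C3 psiB = Real.sqrt (3/4) := by
  unfold C3 conc
  congr 1
  simp [Matrix.trace, Matrix.mul_apply, redMat, psiB, Fintype.sum_prod_type, Fin.sum_univ_two]
  try norm_num

theorem C4_psiB : C4 psiB = Real.sqrt (3/4) := by
  unfold C4 conc
  congr 1
  simp [Matrix.trace, Matrix.mul_apply, redMat, psiB, Fintype.sum_prod_type, Fin.sum_univ_two]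
  try norm_num

theorem C12_psiB : C12 psiB = Real.sqrt (5/4) := by
  unfold C12 conc
  congr 1
  simp [Matrix.trace, Matrix.mul_apply, redMat, psiB, Fintype.sum_prod_type, Fin.sum_univ_two]
  try norm_num

theorem C13_psiB : C13 psiB = Real.sqrt (1) := by
  unfold C13 conc
  congr 1
  simp [Matrix.trace, Matrix.mul_apply, redMat, psiB, Fintype.sum_prod_type, Fin.sum_univ_two]
  try norm_num

theorem C14_psiB : C14 psiB = Real.sqrt (1) := by
  unfold C14 conc
  congr 1
  simp [Matrix.trace, Matrix.mul_apply, redMat, psiB, Fintype.sum_prod_type, Fin.sum_univ_two]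
  try norm_num

/-- The concurrence rectangular pyramid measure distinguishes `ψ_A` and `ψ_B`:
`V₁₂₃₄(ψ_A) > V₁₂₃₄(ψ_B) > 0`. -/
theorem V1234_psiA_gt_V1234_psiB :
    V1234 psiB < V1234 psiA ∧ 0 < V1234 psiB := by
  have h1 : Real.sqrt (3/4) < 1 := by
    rw [Real.sqrt_lt' (by norm_num)]; norm_num
  have h0 : 0 < Real.sqrt (3/4) := Real.sqrt_pos.2 (by norm_num)
  have g1 : 1 < Real.sqrt (5/4) := by
    rw [Real.lt_sqrt (by norm_num)]; norm_num
  unfold V1234 pyrA pyrH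
  rw [C1_psiA, C2_psiA, C3_psiA, C4_psiA, C12_psiA, C13_psiA, C14_psiA,
    C1_psiB, C2_psiB, C3_psiB, C4_psiB, C12_psiB, C13_psiB, C14_psiB]
  simp only [Real.sqrt_one, mul_one]
  generalize Real.sqrt (3/4) = x at *
  generalize Real.sqrt (5/4) = y at *
  have y0 : 0 < y := by linarith
  refine ⟨?_, by positivity⟩
  have e1 : (x * x * x) ^ ((1:ℝ)/4) < x ^ ((1:ℝ)/4) := by
    apply Real.rpow_lt_rpow (by positivity) _ (by norm_num)
    nlinarith [mul_pos h0 h0, mul_pos (mul_pos h0 h0) (sub_pos.2 h1), mul_pos h0 (sub_pos.2 h1)]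
  have e2 : y ^ ((1:ℝ)/3) < (y * y * y) ^ ((1:ℝ)/3) := by
    apply Real.rpow_lt_rpow (by positivity) _ (by norm_num)
    nlinarith [mul_pos y0 y0, mul_pos (mul_pos y0 y0) (sub_pos.2 g1), mul_pos y0 (sub_pos.2 g1)]
  gcongr
end

section
/- For the four-qubit state |ψ_C⟩ = (1/√5)(|0000⟩ + |1111⟩ + |0011⟩ + |0101⟩ + |0110⟩), the genuine multipartite concurrence, defined as the minimum of the seven bipartition concurrences, equals 4/5: C_GME(ψ_C) = 4/5. -/
open scoped BigOperators

/-- The genuine multipartite concurrence: the minimum of the seven bipartition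
concurrences `C_{1|234}, C_{2|134}, C_{3|124}, C_{4|123}, C_{12|34}, C_{13|24}, C_{14|23}`. -/
noncomputable def CGME {d₁ d₂ d₃ d₄ : ℕ} (ψ : Fin d₁ × Fin d₂ × Fin d₃ × Fin d₄ → ℂ) : ℝ :=
  min (min (min (C1 ψ) (C2 ψ)) (min (C3 ψ) (C4 ψ))) (min (min (C12 ψ) (C13 ψ)) (C14 ψ))

/-- The four-qubit state `ψ_C = (1/√5)(|0000⟩ + |1111⟩ + |0011⟩ + |0101⟩ + |0110⟩)`. -/
noncomputable def psiC : Fin 2 × Fin 2 × Fin 2 × Fin 2 → ℂ :=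
  fun x => if x = (0, 0, 0, 0) ∨ x = (1, 1, 1, 1) ∨ x = (0, 0, 1, 1) ∨ x = (0, 1, 0, 1)
      ∨ x = (0, 1, 1, 0)
    then ((Real.sqrt 5)⁻¹ : ℝ) else 0

lemma s5_aux : (((Real.sqrt 5)⁻¹ : ℝ) : ℂ) * (((Real.sqrt 5)⁻¹ : ℝ) : ℂ) = 1 / 5 := by
  rw [← Complex.ofReal_mul, ← mul_inv, Real.mul_self_sqrt (by norm_num)]
  norm_num

lemma C1_psiC : C1 psiC = 4 / 5 := by
  have h : (4 / 5 : ℝ) = Real.sqrt (2 * (1 - 17 / 25)) := by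
    rw [show (2 * (1 - 17 / 25) : ℝ) = (4 / 5) ^ 2 by norm_num, Real.sqrt_sq (by norm_num)]
  rw [h, C1, conc]
  simp only [Matrix.trace, Matrix.diag, Matrix.mul_apply, redMat, Matrix.of_apply, psiC,
    Fintype.sum_prod_type, Fin.sum_univ_two, apply_ite (starRingEnd ℂ), Complex.conj_ofReal, map_zero]
  simp [-Complex.ofReal_inv, s5_aux]
  norm_num

lemma C2_psiC : 4 / 5 ≤ C2 psiC := by
  rw [C2, conc]
  apply Real.le_sqrt_of_sq_le
  simp only [Matrix.trace, Matrix.diag, Matrix.mul_apply, redMat, Matrix.of_apply, psiC,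
    Fintype.sum_prod_type, Fin.sum_univ_two, apply_ite (starRingEnd ℂ), Complex.conj_ofReal, map_zero]
  simp [-Complex.ofReal_inv, s5_aux]
  norm_num

lemma C3_psiC : 4 / 5 ≤ C3 psiC := by
  rw [C3, conc]
  apply Real.le_sqrt_of_sq_le
  simp only [Matrix.trace, Matrix.diag, Matrix.mul_apply, redMat, Matrix.of_apply, psiC,
    Fintype.sum_prod_type, Fin.sum_univ_two, apply_ite (starRingEnd ℂ), Complex.conj_ofReal, map_zero]
  simp [-Complex.ofReal_inv, s5_aux]
  norm_num

lemma C4_psiC : 4 / 5 ≤ C4 psiC := by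
  rw [C4, conc]
  apply Real.le_sqrt_of_sq_le
  simp only [Matrix.trace, Matrix.diag, Matrix.mul_apply, redMat, Matrix.of_apply, psiC,
    Fintype.sum_prod_type, Fin.sum_univ_two, apply_ite (starRingEnd ℂ), Complex.conj_ofReal, map_zero]
  simp [-Complex.ofReal_inv, s5_aux]
  norm_num

lemma C12_psiC : 4 / 5 ≤ C12 psiC := by
  rw [C12, conc]
  apply Real.le_sqrt_of_sq_le
  simp only [Matrix.trace, Matrix.diag, Matrix.mul_apply, redMat, Matrix.of_apply, psiC,
    Fintype.sum_prod_type, Fin.sum_univ_two, apply_ite (starRingEnd ℂ), Complex.conj_ofReal, map_zero]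
  simp [-Complex.ofReal_inv, s5_aux]
  norm_num

lemma C13_psiC : 4 / 5 ≤ C13 psiC := by
  rw [C13, conc]
  apply Real.le_sqrt_of_sq_le
  simp only [Matrix.trace, Matrix.diag, Matrix.mul_apply, redMat, Matrix.of_apply, psiC,
    Fintype.sum_prod_type, Fin.sum_univ_two, apply_ite (starRingEnd ℂ), Complex.conj_ofReal, map_zero]
  simp [-Complex.ofReal_inv, s5_aux]
  norm_num

lemma C14_psiC : 4 / 5 ≤ C14 psiC := by
  rw [C14, conc]
  apply Real.le_sqrt_of_sq_le
  simp only [Matrix.trace, Matrix.diag, Matrix.mul_apply, redMat, Matrix.of_apply, psiC,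
    Fintype.sum_prod_type, Fin.sum_univ_two, apply_ite (starRingEnd ℂ), Complex.conj_ofReal, map_zero]
  simp [-Complex.ofReal_inv, s5_aux]
  norm_num

/-- The genuine multipartite concurrence of `ψ_C` equals `4/5`. -/
theorem CGME_psiC : CGME psiC = 4 / 5 := by
  have h1 := C1_psiC
  have h2 := C2_psiC
  have h3 := C3_psiC
  have h4 := C4_psiC
  have h5 := C12_psiC
  have h6 := C13_psiC
  have h7 := C14_psiC
  unfold CGME
  apply le_antisymm
  · rw [← h1]
    exact (min_le_left _ _).trans ((min_le_left _ _).trans (min_le_left _ _))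
  · exact le_min (le_min (le_min h1.ge h2) (le_min h3 h4)) (le_min (le_min h5 h6) h7)
end
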